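/- arXiv:1509.08331 — 8 statements merged into one kernel-verified Lean document; each statement's English description precedes it below -/
import Mathlib

section
/- Fix λ > 0, P_T > 0, β ≥ 0, and set α = λ·√(P_T). Then ∫_{{x ∈ ℝ : |x| > β}} (α·|x| − α·β − α/λ)² · (λ/2)·exp(−λ|x|) dx = P_T · exp(−λβ). Consequently, the affine encoder g(x) = α|x| − αβ − α·λ⁻¹ applied on the transmission region {|X| > β} satisfies the average power constraint E[Y² | U = 1] = P_T with equality. -/
open MeasureTheory Real

/-!
The integrand depends only on `|x|`, so the integral is twice the one over `(β, ∞)`. In the variable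
`u = l * (x - β)` the encoder output is `√PT * (u - 1)`, and `(u - 1)² e⁻ᵘ` has the antiderivative
`-(u² + 1) e⁻ᵘ`, which increases from `-1` at `u = 0` to the limit `0` at infinity.
Integrability comes for free, since the integrand is nonnegative and its antiderivative converges.
-/

lemma hasDerivAt_neg_sq_add_one_mul_exp_neg (u : ℝ) :
    HasDerivAt (fun u : ℝ => -((u ^ 2 + 1) * exp (-u))) ((u - 1) ^ 2 * exp (-u)) u := by
  convert! (((hasDerivAt_id u).pow 2).add_const 1 |>.mul (hasDerivAt_id u).neg.exp).neg using 1
  simp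
  ring

lemma tendsto_neg_sq_add_one_mul_exp_neg :
    Filter.Tendsto (fun u : ℝ => -((u ^ 2 + 1) * exp (-u))) Filter.atTop (nhds 0) := by
  have h := ((tendsto_pow_mul_exp_neg_atTop_nhds_zero 2).add
    (tendsto_pow_mul_exp_neg_atTop_nhds_zero 0)).neg
  simp only [add_zero, neg_zero] at h
  exact h.congr fun u => by ring

theorem affine_encoder_power (l PT β : ℝ) (hl : 0 < l) (hPT : 0 < PT) (hβ : 0 ≤ β)
    (α : ℝ) (hα : α = l * Real.sqrt PT) :
    ∫ x in {x : ℝ | β < |x|},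
        (α * |x| - α * β - α / l) ^ 2 * ((l / 2) * Real.exp (-l * |x|)) =
      PT * Real.exp (-l * β) := by
  set h : ℝ → ℝ := fun x => (α * x - α * β - α / l) ^ 2 * ((l / 2) * exp (-l * x)) with hh
  have hfold : ∫ x in {x : ℝ | β < |x|}, h |x| = 2 * ∫ x in Set.Ioi β, h x := by
    have hmeas : MeasurableSet {x : ℝ | β < |x|} := measurableSet_lt measurable_const (by fun_prop)
    rw [← integral_indicator hmeas]
    have := integral_comp_abs (f := (Set.Ioi β).indicator h)
    rw [setIntegral_indicator measurableSet_Ioi, Set.inter_eq_right.mpr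
      (Set.Ioi_subset_Ioi hβ)] at this
    rw [← this]
    rfl
  set c := PT / 2 * exp (-l * β) with hc
  have hderiv : ∀ x ∈ Set.Ici β, HasDerivAt
      (fun x => c * -(((l * (x - β)) ^ 2 + 1) * exp (-(l * (x - β))))) (h x) x := by
    intro x _
    have hu : HasDerivAt (fun x => l * (x - β)) l x := by
      simpa using ((hasDerivAt_id x).sub_const β).const_mul l
    convert! ((hasDerivAt_neg_sq_add_one_mul_exp_neg (l * (x - β))).comp x hu).const_mul c using 1
    have he : exp (-l * x) = exp (-l * β) * exp (-(l * (x - β))) := by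
      rw [← exp_add]; congr 1; ring
    have hg : (α * x - α * β - α / l) ^ 2 = PT * (l * (x - β) - 1) ^ 2 := by
      have : α * x - α * β - α / l = √PT * (l * (x - β) - 1) := by
        rw [hα]; field_simp
      rw [this, mul_pow, sq_sqrt hPT.le]
    simp only [hh, hc, hg, he]
    ring
  have hlim : Filter.Tendsto (fun x => c * -(((l * (x - β)) ^ 2 + 1) * exp (-(l * (x - β)))))
      Filter.atTop (nhds 0) := by
    have hu : Filter.Tendsto (fun x => l * (x - β)) Filter.atTop Filter.atTop :=
      (Filter.tendsto_atTop_add_const_right _ (-β) Filter.tendsto_id).const_mul_atTop hl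
    simpa using (tendsto_neg_sq_add_one_mul_exp_neg.comp hu).const_mul c
  have hpos : ∀ x ∈ Set.Ioi β, 0 ≤ h x := fun x _ => by
    simp only [hh]; positivity
  change ∫ x in {x : ℝ | β < |x|}, h |x| = _
  rw [hfold, integral_Ioi_of_hasDerivAt_of_nonneg' hderiv hpos hlim]
  simp only [hc, sub_self, mul_zero, neg_zero, exp_zero]
  ring
end

section
/- Let X and V be independent random variables on a probability space with X exponentially distributed with rate r > 0 and V Gamma-distributed with shape k > 0 and rate r. Then the conditional expectation of X given the σ-algebra generated by X + V satisfies E[X | σ(X+V)] = (X+V)/(k+1) almost surely. -/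
open MeasureTheory ProbabilityTheory Real

/-!
Multiplying a Gamma density by `x` raises its shape: `x · γ_{a,r}(dx) = (a / r) · γ_{a+1,r}(dx)`
(`gammaMeasure_withDensity_id`). Gamma laws of equal rate also form a convolution semigroup,
`γ_{a,r} ∗ γ_{b,r} = γ_{a+b,r}` (`gammaMeasure_conv`): the substitution `y = x u` shows that the
convolution of the densities is proportional to the density of `γ_{a+b,r}`, and the constant is `1`
because both sides have mass `1`. Hence, for independent `X ∼ γ_{a,r}` and `V ∼ γ_{b,r}` and every Borel
set `B`,
`E[X; X + V ∈ B] = (a / r) · γ_{a+b+1,r}(B)` and `E[V; X + V ∈ B] = (b / r) · γ_{a+b+1,r}(B)`.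
With `a = 1` (the exponential law) and `b = k`, the second expectation is `k` times the first, so
`E[X + V; X + V ∈ B] = (k + 1) · E[X; X + V ∈ B]`, which is the defining property of the
conditional expectation.
-/

lemma measurable_gammaPDF (a r : ℝ) : Measurable (gammaPDF a r) :=
  (measurable_gammaPDFReal a r).ennreal_ofReal

/-- Homogeneity of the convolution integrand under `y = x u`: its dependence on `x` is, up to
normalization, the Gamma density of shape `a + b`. -/
lemma gammaPDFReal_mul_scale {a b r x : ℝ} (hx : 0 < x) (u : ℝ) :
    x * (gammaPDFReal a r (x * u) * gammaPDFReal b r (-(x * u) + x)) * gammaPDFReal (a + b) r 1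
      = gammaPDFReal (a + b) r x * (gammaPDFReal a r u * gammaPDFReal b r (1 - u)) := by
  by_cases hu : 0 ≤ u
  · by_cases hu1 : 0 ≤ 1 - u
    · have e : -(x * u) + x = x * (1 - u) := by ring
      rw [e]
      simp only [gammaPDFReal, if_pos hu, if_pos hu1, if_pos hx.le, if_pos (zero_le_one (α := ℝ)),
        if_pos (mul_nonneg hx.le hu), if_pos (mul_nonneg hx.le hu1), mul_rpow hx.le hu,
        mul_rpow hx.le hu1, one_rpow]
      have hp : x ^ (a + b - 1) = x * x ^ (a - 1) * x ^ (b - 1) := by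
        rw [mul_assoc, ← rpow_add hx, mul_comm, ← rpow_add_one hx.ne']
        congr 1
        ring
      have he : rexp (-(r * (x * u))) * rexp (-(r * (x * (1 - u)))) * rexp (-(r * 1))
          = rexp (-(r * x)) * (rexp (-(r * u)) * rexp (-(r * (1 - u)))) := by
        simp only [← Real.exp_add]
        congr 1
        ring
      rw [hp]
      linear_combination (x * (r ^ a / Gamma a * (x ^ (a - 1) * u ^ (a - 1))) *
        (r ^ b / Gamma b * (x ^ (b - 1) * (1 - u) ^ (b - 1))) * (r ^ (a + b) / Gamma (a + b))) * he
    · have h : ¬ 0 ≤ -(x * u) + x := by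
        rw [not_le] at hu1 ⊢
        nlinarith
      simp only [gammaPDFReal, if_neg hu1, if_neg h, mul_zero, zero_mul]
  · have h : ¬ 0 ≤ x * u := by
      rw [not_le] at hu ⊢
      exact mul_neg_of_pos_of_neg hx hu
    simp [gammaPDFReal, if_neg hu, if_neg h]

/-- The convolution of two Gamma densities of equal rate is a constant multiple (a Beta integral,
whose value is irrelevant) of the Gamma density whose shape is the sum. -/
lemma exists_lconvolution_gammaPDF {a b r : ℝ} (ha : 0 < a) (hb : 0 < b) (hr : 0 < r) :
    ∃ D : ENNReal, lconvolution (gammaPDF a r) (gammaPDF b r) volume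
      =ᵐ[volume] D • gammaPDF (a + b) r := by
  have hq : 0 < gammaPDFReal (a + b) r 1 := gammaPDFReal_pos (add_pos ha hb) hr one_pos
  refine ⟨ENNReal.ofReal (gammaPDFReal (a + b) r 1)⁻¹ *
    ∫⁻ u, gammaPDF a r u * gammaPDF b r (1 - u), ?_⟩
  -- The scaling substitution degenerates at `x = 0`, which is a null set.
  filter_upwards [Measure.ae_ne volume (0 : ℝ)] with x hx0
  rw [lconvolution_def, Pi.smul_apply, smul_eq_mul]
  have hma := measurable_gammaPDF a r
  have hmb := measurable_gammaPDF b r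
  rcases hx0.lt_or_gt with hx | hx
  · rw [gammaPDF_of_neg hx, mul_zero, lintegral_eq_zero_iff (by fun_prop)]
    refine ae_of_all _ fun y => ?_
    rcases lt_or_ge y 0 with hy | hy
    · simp [gammaPDF_of_neg hy]
    · simp [gammaPDF_of_neg (show -y + x < 0 by linarith)]
  · have hsub : ∫⁻ y, gammaPDF a r y * gammaPDF b r (-y + x)
        = ENNReal.ofReal x * ∫⁻ u, gammaPDF a r (x * u) * gammaPDF b r (-(x * u) + x) := by
      conv_lhs => rw [← Real.smul_map_volume_mul_left hx.ne', lintegral_smul_measure,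
        lintegral_map (by fun_prop) (by fun_prop), abs_of_pos hx]
      rfl
    rw [hsub, ← lintegral_const_mul _ (by fun_prop), ← lintegral_const_mul _ (by fun_prop),
      ← lintegral_mul_const _ (by fun_prop)]
    refine lintegral_congr fun u => ?_
    have na := gammaPDFReal_nonneg ha hr
    have nb := gammaPDFReal_nonneg hb hr
    simp only [gammaPDF]
    rw [← ENNReal.ofReal_mul (na _), ← ENNReal.ofReal_mul (na _), ← ENNReal.ofReal_mul hx.le,
      ← ENNReal.ofReal_mul (by positivity),
      ← ENNReal.ofReal_mul (mul_nonneg (by positivity) (mul_nonneg (na _) (nb _)))]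
    congr 1
    have h := gammaPDFReal_mul_scale (a := a) (b := b) (r := r) hx u
    rw [← eq_div_iff hq.ne'] at h
    rw [h]
    field_simp

/-- Gamma laws of equal rate form a convolution semigroup in the shape parameter. -/
lemma gammaMeasure_conv {a b r : ℝ} (ha : 0 < a) (hb : 0 < b) (hr : 0 < r) :
    (gammaMeasure a r).conv (gammaMeasure b r) = gammaMeasure (a + b) r := by
  have := isProbabilityMeasure_gammaMeasure ha hr
  have := isProbabilityMeasure_gammaMeasure hb hr
  have := isProbabilityMeasure_gammaMeasure (add_pos ha hb) hr
  obtain ⟨D, hD⟩ := exists_lconvolution_gammaPDF ha hb hr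
  have h : (gammaMeasure a r).conv (gammaMeasure b r) = D • gammaMeasure (a + b) r := by
    simp only [gammaMeasure]
    rw [conv_withDensity_eq_lconvolution (measurable_gammaPDF a r) (measurable_gammaPDF b r),
      withDensity_congr_ae hD, withDensity_smul _ (measurable_gammaPDF _ r)]
  -- Both sides are probability measures, so the constant is `1`.
  have h1 : D = 1 := by simpa using (congrArg (fun ν : Measure ℝ => ν Set.univ) h).symm
  rw [h, h1, one_smul]

/-- Size-biasing a Gamma law raises its shape by one. -/
lemma gammaMeasure_withDensity_id {a r : ℝ} (ha : 0 < a) (hr : 0 < r) :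
    (gammaMeasure a r).withDensity ENNReal.ofReal
      = ENNReal.ofReal (a / r) • gammaMeasure (a + 1) r := by
  rw [gammaMeasure, gammaMeasure, ← withDensity_mul _ (measurable_gammaPDF a r) ENNReal.measurable_ofReal,
    ← withDensity_smul _ (measurable_gammaPDF _ r)]
  congr 1
  ext x
  simp only [Pi.mul_apply, Pi.smul_apply, smul_eq_mul, gammaPDF]
  rw [← ENNReal.ofReal_mul (gammaPDFReal_nonneg ha hr x), ← ENNReal.ofReal_mul (by positivity)]
  congr 1
  unfold gammaPDFReal
  split_ifs with hx
  · have hG := (Gamma_pos_of_pos ha).ne'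
    rw [Real.Gamma_add_one ha.ne', rpow_add_one hr.ne', add_sub_cancel_right]
    -- At `x = 0` the factor `x` and the power `x ^ a` both vanish.
    rcases hx.eq_or_lt with rfl | hx
    · simp [zero_rpow ha.ne']
    · rw [rpow_sub_one hx.ne']
      field_simp
  · simp

section

variable {Ω : Type*} [MeasurableSpace Ω] {μ : Measure Ω} {X V : Ω → ℝ} {a b r : ℝ}

lemma ae_nonneg_of_map_gammaMeasure (hX : Measurable X) (hXlaw : μ.map X = gammaMeasure a r) :
    0 ≤ᵐ[μ] X := by
  have h : ∀ᵐ x ∂(μ.map X), 0 ≤ x := by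
    rw [hXlaw, gammaMeasure, ae_withDensity_iff (measurable_gammaPDF a r)]
    refine ae_of_all _ fun x hx => ?_
    by_contra! hneg
    exact hx (gammaPDF_of_neg hneg)
  exact ae_of_ae_map hX.aemeasurable h

/-- The distribution of `X + V` under the size-biased measure `X dμ` is a multiple of the Gamma law
of shape `a + b + 1`, because size-biasing replaces the law of `X` by a Gamma law of shape `a + 1`
and leaves `V` independent with its own law. -/
lemma setLIntegral_gamma_add [IsProbabilityMeasure μ] (hX : Measurable X) (hV : Measurable V)
    (ha : 0 < a) (hb : 0 < b) (hr : 0 < r) (hindep : IndepFun X V μ)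
    (hXlaw : μ.map X = gammaMeasure a r) (hVlaw : μ.map V = gammaMeasure b r)
    {B : Set ℝ} (hB : MeasurableSet B) :
    ∫⁻ ω in (fun ω => X ω + V ω) ⁻¹' B, ENNReal.ofReal (X ω) ∂μ
      = ENNReal.ofReal (a / r) * gammaMeasure (a + b + 1) r B := by
  have := isProbabilityMeasure_gammaMeasure ha hr
  have := isProbabilityMeasure_gammaMeasure hb hr
  have := isProbabilityMeasure_gammaMeasure (add_pos ha one_pos) hr
  have hadd : Measurable fun p : ℝ × ℝ => p.1 + p.2 := by fun_prop
  have hlaw : μ.map (fun ω => (X ω, V ω)) = (gammaMeasure a r).prod (gammaMeasure b r) := by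
    rw [hindep.map_prod_eq_prod_map_map hX.aemeasurable hV.aemeasurable, hXlaw, hVlaw]
  have h1 : ∫⁻ ω in (fun ω => X ω + V ω) ⁻¹' B, ENNReal.ofReal (X ω) ∂μ
      = ∫⁻ p in (fun p : ℝ × ℝ => p.1 + p.2) ⁻¹' B, ENNReal.ofReal p.1
          ∂(μ.map fun ω => (X ω, V ω)) := by
    rw [setLIntegral_map (hadd hB) (by fun_prop) (hX.prodMk hV)]
    rfl
  rw [h1, hlaw, ← withDensity_apply _ (hadd hB),
    ← prod_withDensity_left ENNReal.measurable_ofReal, gammaMeasure_withDensity_id ha hr,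
    Measure.prod_smul_left, Measure.smul_apply, smul_eq_mul, ← Measure.map_apply hadd hB,
    add_right_comm, ← gammaMeasure_conv (add_pos ha one_pos) hb hr]
  rfl

lemma integrable_of_map_gammaMeasure [IsProbabilityMeasure μ] (hX : Measurable X)
    (hV : Measurable V) (ha : 0 < a) (hb : 0 < b) (hr : 0 < r) (hindep : IndepFun X V μ)
    (hXlaw : μ.map X = gammaMeasure a r) (hVlaw : μ.map V = gammaMeasure b r) :
    Integrable X μ := by
  have := isProbabilityMeasure_gammaMeasure (add_pos (add_pos ha hb) one_pos) hr
  refine ⟨hX.aestronglyMeasurable, ?_⟩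
  rw [hasFiniteIntegral_iff_ofReal (ae_nonneg_of_map_gammaMeasure hX hXlaw)]
  have h := setLIntegral_gamma_add hX hV ha hb hr hindep hXlaw hVlaw MeasurableSet.univ
  rw [Set.preimage_univ, Measure.restrict_univ, measure_univ, mul_one] at h
  rw [h]
  exact ENNReal.ofReal_lt_top

lemma setIntegral_gamma_add [IsProbabilityMeasure μ] (hX : Measurable X) (hV : Measurable V)
    (ha : 0 < a) (hb : 0 < b) (hr : 0 < r) (hindep : IndepFun X V μ)
    (hXlaw : μ.map X = gammaMeasure a r) (hVlaw : μ.map V = gammaMeasure b r)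
    {B : Set ℝ} (hB : MeasurableSet B) :
    ∫ ω in (fun ω => X ω + V ω) ⁻¹' B, X ω ∂μ
      = a / r * (gammaMeasure (a + b + 1) r).real B := by
  rw [integral_eq_lintegral_of_nonneg_ae
      (ae_restrict_of_ae (ae_nonneg_of_map_gammaMeasure hX hXlaw)) hX.aestronglyMeasurable,
    setLIntegral_gamma_add hX hV ha hb hr hindep hXlaw hVlaw hB, ENNReal.toReal_mul,
    ENNReal.toReal_ofReal (by positivity), measureReal_def]

end

/-- If `X` is exponential with rate `r > 0` and `V` is Gamma with shape `k > 0` and rate `r`,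
independent of `X`, then `E[X | σ(X + V)] = (X + V)/(k + 1)` almost surely. -/
theorem exp_gamma_condexp_linear
    {Ω : Type*} [MeasurableSpace Ω] (μ : Measure Ω) [IsProbabilityMeasure μ]
    (X V : Ω → ℝ) (hX : Measurable X) (hV : Measurable V)
    (r k : ℝ) (hr : 0 < r) (hk : 0 < k)
    (hindep : IndepFun X V μ)
    (hXlaw : μ.map X = expMeasure r)
    (hVlaw : μ.map V = gammaMeasure k r) :
    μ[X | MeasurableSpace.comap (fun ω => X ω + V ω) Real.measurableSpace]
      =ᵐ[μ] fun ω => (X ω + V ω) / (k + 1) := by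
  rw [expMeasure] at hXlaw
  have hS : Measurable fun ω => X ω + V ω := hX.add hV
  have hXi := integrable_of_map_gammaMeasure hX hV one_pos hk hr hindep hXlaw hVlaw
  have hVi := integrable_of_map_gammaMeasure hV hX hk one_pos hr hindep.symm hVlaw hXlaw
  refine (ae_eq_condExp_of_forall_setIntegral_eq hS.comap_le hXi
    (fun s _ _ => ((hXi.add hVi).div_const _).integrableOn) ?_ ?_).symm
  · rintro _ ⟨B, hB, rfl⟩ -
    have h1 := setIntegral_gamma_add hX hV one_pos hk hr hindep hXlaw hVlaw hB
    have h2 := setIntegral_gamma_add hV hX hk one_pos hr hindep.symm hVlaw hXlaw hB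
    simp only [add_comm (V _) (X _), add_comm k 1] at h2
    rw [integral_div, integral_add' hXi.integrableOn hVi.integrableOn, h1, h2]
    field_simp
    ring
  · exact ((comap_measurable _).div_const _).aestronglyMeasurable
end

section
/- Let X and V be independent random variables on a probability space with X exponentially distributed with rate r > 0 and V Gamma-distributed with shape k > 0 and rate r. Then for every Borel measurable function h : ℝ → ℝ, E[(X − h(X+V))²] ≥ k/((k+1)·r²), i.e., no measurable decoder based on the noisy observation X + V achieves mean squared error below k/((k+1)r²), and this bound is attained by h(s) = s/(k+1). -/
/-!
For a fixed value `s` of `S = X + V`, the joint density of `(S, V)` at `(s, v)` is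
`C e^{-rs} v^{k-1}` on `0 ≤ v ≤ s`, because the exponential factors `e^{-r(s-v)}` and `e^{-rv}`
combine to one that does not depend on `v`. Hence the mean squared error of a decoder `h` is an
integral over `s` of the quantities `C e^{-rs} ∫_0^s (s - v - h s)² v^{k-1} dv`
(`mse_eq_lintegral_density`). Each of these is a quadratic in the number `h s`, minimised at
`h s = s/(k+1)` since the probability density proportional to `v^{k-1}` on `[0, s]` has mean
`ks/(k+1)` (`inner_lintegral_le`). So the decoder `s ↦ s/(k+1)` is optimal pointwise in `s`, which
makes any integrability assumption on `h` superfluous.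

The error of the optimal decoder is `(kX - V)/(k+1)`. It has mean zero, and its variance is
`(k² / r² + k / r²)/(k+1)² = k/((k+1) r²)` by independence; the first two moments come from
`lintegral_pow_gammaMeasure`.
-/

open MeasureTheory ProbabilityTheory Real

/-- The moments of the Gamma distribution: `x ^ n` times the density of shape `a` is a multiple
of the density of shape `a + n`. -/
lemma lintegral_pow_gammaMeasure {a r : ℝ} (ha : 0 < a) (hr : 0 < r) (n : ℕ) :
    ∫⁻ x, ENNReal.ofReal (x ^ n) ∂(gammaMeasure a r) =
      ENNReal.ofReal (Gamma (a + n) / (Gamma a * r ^ n)) := by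
  have han : 0 < a + n := by positivity
  have h1 := Gamma_pos_of_pos ha
  have h2 := Gamma_pos_of_pos han
  have hm : ∀ b : ℝ, Measurable (gammaPDF b r) := fun b =>
    (measurable_gammaPDFReal b r).ennreal_ofReal
  rw [gammaMeasure, lintegral_withDensity_eq_lintegral_mul _ (hm a) (by fun_prop)]
  have : ∀ᵐ x : ℝ, (gammaPDF a r * fun x => ENNReal.ofReal (x ^ n)) x =
      ENNReal.ofReal (Gamma (a + n) / (Gamma a * r ^ n)) * gammaPDF (a + n) r x := by
    -- At `x = 0` the identity may fail, because of the conventions for `0 ^ (a - 1)`.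
    filter_upwards [(Set.finite_singleton (0 : ℝ)).countable.ae_notMem volume] with x hx
    rcases lt_or_gt_of_ne (show x ≠ 0 from hx) with h | h
    · simp [gammaPDF_of_neg h]
    · rw [Pi.mul_apply, gammaPDF_of_nonneg h.le, gammaPDF_of_nonneg h.le,
        ← ENNReal.ofReal_mul (by positivity), ← ENNReal.ofReal_mul (by positivity)]
      congr 1
      rw [show a + n - 1 = (a - 1) + n by ring, rpow_add h, rpow_natCast, rpow_add hr,
        rpow_natCast]
      field_simp
  rw [lintegral_congr_ae this, lintegral_const_mul _ (hm _), lintegral_gammaPDF_eq_one han hr,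
    mul_one]

lemma ae_nonneg_gammaMeasure (a r : ℝ) : ∀ᵐ x ∂(gammaMeasure a r), 0 ≤ x := by
  have hm : Measurable (gammaPDF a r) := (measurable_gammaPDFReal a r).ennreal_ofReal
  rw [gammaMeasure, ae_withDensity_iff hm]
  refine Filter.Eventually.of_forall fun x hx => ?_
  by_contra! h
  exact hx (gammaPDF_of_neg h)

lemma integrable_pow_gammaMeasure {a r : ℝ} (ha : 0 < a) (hr : 0 < r) (n : ℕ) :
    Integrable (fun x : ℝ => x ^ n) (gammaMeasure a r) := by
  refine (lintegral_ofReal_ne_top_iff_integrable (by fun_prop) ?_).1 ?_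
  · filter_upwards [ae_nonneg_gammaMeasure a r] with x hx
    exact pow_nonneg hx n
  · rw [lintegral_pow_gammaMeasure ha hr]
    exact ENNReal.ofReal_ne_top

lemma integral_pow_gammaMeasure {a r : ℝ} (ha : 0 < a) (hr : 0 < r) (n : ℕ) :
    ∫ x, x ^ n ∂(gammaMeasure a r) = Gamma (a + n) / (Gamma a * r ^ n) := by
  have h1 := Gamma_pos_of_pos ha
  have h2 := Gamma_pos_of_pos (show 0 < a + n by positivity)
  rw [integral_eq_lintegral_of_nonneg_ae _ (by fun_prop), lintegral_pow_gammaMeasure ha hr,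
    ENNReal.toReal_ofReal (by positivity)]
  filter_upwards [ae_nonneg_gammaMeasure a r] with x hx
  exact pow_nonneg hx n

lemma integral_id_gammaMeasure {a r : ℝ} (ha : 0 < a) (hr : 0 < r) :
    ∫ x, x ∂(gammaMeasure a r) = a / r := by
  have h := integral_pow_gammaMeasure ha hr 1
  have h1 := (Gamma_pos_of_pos ha).ne'
  simp only [pow_one, Nat.cast_one, Gamma_add_one ha.ne'] at h
  rw [h]
  field_simp

lemma integral_sq_gammaMeasure {a r : ℝ} (ha : 0 < a) (hr : 0 < r) :
    ∫ x, x ^ 2 ∂(gammaMeasure a r) = a * (a + 1) / r ^ 2 := by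
  have h := integral_pow_gammaMeasure ha hr 2
  have h1 := (Gamma_pos_of_pos ha).ne'
  rw [show a + ((2 : ℕ) : ℝ) = (a + 1) + 1 by push_cast; ring, Gamma_add_one (by positivity),
    Gamma_add_one ha.ne'] at h
  rw [h]
  field_simp

/-- The mean squared error of a decoder `h`, as an iterated integral of the joint density of
`(X + V, V)`. -/
lemma mse_eq_lintegral_density
    {Ω : Type*} [MeasurableSpace Ω] (μ : Measure Ω) [IsProbabilityMeasure μ]
    (X V : Ω → ℝ) (hX : Measurable X) (hV : Measurable V)
    (r k : ℝ) (hr : 0 < r) (hk : 0 < k)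
    (hindep : IndepFun X V μ)
    (hXlaw : μ.map X = expMeasure r)
    (hVlaw : μ.map V = gammaMeasure k r) (h : ℝ → ℝ) (hh : Measurable h) :
    ∫⁻ ω, ENNReal.ofReal ((X ω - h (X ω + V ω)) ^ 2) ∂μ =
      ∫⁻ s, ∫⁻ v, gammaPDF k r v * (gammaPDF 1 r (s - v) * ENNReal.ofReal ((s - v - h s) ^ 2)) := by
  have hm : ∀ b : ℝ, Measurable (gammaPDF b r) := fun b =>
    (measurable_gammaPDFReal b r).ennreal_ofReal
  have hm1 := hm 1
  have hmk := hm k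
  have := isProbabilityMeasure_gammaMeasure hk hr
  have := isProbabilityMeasure_gammaMeasure one_pos hr
  have hprod := (indepFun_iff_map_prod_eq_prod_map_map hX.aemeasurable hV.aemeasurable).1 hindep
  rw [hXlaw, hVlaw, expMeasure] at hprod
  have hG : Measurable fun p : ℝ × ℝ => ENNReal.ofReal ((p.1 - h (p.1 + p.2)) ^ 2) := by
    fun_prop
  calc ∫⁻ ω, ENNReal.ofReal ((X ω - h (X ω + V ω)) ^ 2) ∂μ
      = ∫⁻ p, ENNReal.ofReal ((p.1 - h (p.1 + p.2)) ^ 2) ∂(μ.map fun ω => (X ω, V ω)) := by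
        rw [lintegral_map hG (hX.prodMk hV)]
    _ = ∫⁻ v, ∫⁻ x, ENNReal.ofReal ((x - h (x + v)) ^ 2) ∂(gammaMeasure 1 r)
          ∂(gammaMeasure k r) := by
        rw [hprod, lintegral_prod_symm' _ hG]
    _ = ∫⁻ v, gammaPDF k r v * ∫⁻ x, ENNReal.ofReal ((x - h (x + v)) ^ 2) ∂(gammaMeasure 1 r) := by
        conv_lhs => rw [gammaMeasure]
        rw [lintegral_withDensity_eq_lintegral_mul _ hmk hG.lintegral_prod_left']
        rfl
    _ = ∫⁻ v, ∫⁻ s, gammaPDF k r v *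
          (gammaPDF 1 r (s - v) * ENNReal.ofReal ((s - v - h s) ^ 2)) := by
        refine lintegral_congr fun v => ?_
        rw [lintegral_const_mul _ (by fun_prop), gammaMeasure,
          lintegral_withDensity_eq_lintegral_mul _ hm1 (by fun_prop),
          ← lintegral_sub_right_eq_self _ v]
        simp
    _ = _ := by
        rw [lintegral_lintegral_swap]
        exact Measurable.aemeasurable (by fun_prop)

/-- The weighted integral of a squared deviation, as a quadratic polynomial in `b`. -/
lemma integral_sq_sub_mul_rpow {k s : ℝ} (hk : 0 < k) (hs : 0 ≤ s) (b : ℝ) :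
    IntervalIntegrable (fun v : ℝ => (v - b) ^ 2 * v ^ (k - 1)) volume 0 s ∧
    ∫ v in (0 : ℝ)..s, (v - b) ^ 2 * v ^ (k - 1) =
      s ^ (k + 2) / (k + 2) - 2 * b * (s ^ (k + 1) / (k + 1)) + b ^ 2 * (s ^ k / k) := by
  have hI : ∀ p : ℝ, 0 < p → IntervalIntegrable (fun v : ℝ => v ^ (p - 1)) volume 0 s :=
    fun p hp => intervalIntegral.intervalIntegrable_rpow' (r := p - 1) (by linarith)
  have hint : ∀ p : ℝ, 0 < p → ∫ v in (0 : ℝ)..s, v ^ (p - 1) = s ^ p / p := fun p hp => by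
    rw [integral_rpow (Or.inl (by linarith)), sub_add_cancel, zero_rpow hp.ne', sub_zero]
  have i0 := (hI k hk).const_mul (b ^ 2)
  have i1 := (hI (k + 1) (by linarith)).const_mul (2 * b)
  have i2 := hI (k + 2) (by linarith)
  have heq : Set.EqOn (fun v : ℝ => v ^ (k + 2 - 1) - 2 * b * v ^ (k + 1 - 1) + b ^ 2 * v ^ (k - 1))
      (fun v : ℝ => (v - b) ^ 2 * v ^ (k - 1)) (Set.uIoc 0 s) := by
    intro v hv
    rw [Set.uIoc_of_le hs] at hv
    have hv := hv.1
    simp only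
    rw [show k + 2 - 1 = (k - 1) + 2 by ring, show k + 1 - 1 = (k - 1) + 1 by ring,
      rpow_add hv, rpow_add hv, rpow_one, rpow_two]
    ring
  have i21 : IntervalIntegrable (fun v : ℝ => v ^ (k + 2 - 1) - 2 * b * v ^ (k + 1 - 1))
      volume 0 s := i2.sub i1
  refine ⟨(i21.add i0).congr heq, ?_⟩
  rw [← intervalIntegral.integral_congr_ae (Filter.Eventually.of_forall heq),
    intervalIntegral.integral_add i21 i0,
    intervalIntegral.integral_sub i2 i1, intervalIntegral.integral_const_mul,
    intervalIntegral.integral_const_mul, hint _ hk, hint _ (by linarith), hint _ (by linarith)]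

/-- Given `X + V = s`, the best constant prediction of `X` is `s / (k + 1)`. -/
lemma inner_lintegral_le {r k : ℝ} (hr : 0 < r) (hk : 0 < k) (s a : ℝ) :
    ∫⁻ v, gammaPDF k r v * (gammaPDF 1 r (s - v) * ENNReal.ofReal ((s - v - s / (k + 1)) ^ 2)) ≤
      ∫⁻ v, gammaPDF k r v * (gammaPDF 1 r (s - v) * ENNReal.ofReal ((s - v - a) ^ 2)) := by
  have hG := Gamma_pos_of_pos hk
  rcases lt_or_ge s 0 with hs | hs
  · have h0 : ∀ v, gammaPDF k r v *
        (gammaPDF 1 r (s - v) * ENNReal.ofReal ((s - v - s / (k + 1)) ^ 2)) = 0 := fun v => by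
      rcases lt_or_ge v 0 with hv | hv
      · simp [gammaPDF_of_neg hv]
      · simp [gammaPDF_of_neg (show s - v < 0 by linarith)]
    simp [h0]
  set C : ℝ := r ^ k / Gamma k * r * exp (-(r * s)) with hC
  have hC0 : 0 ≤ C := by positivity
  have key : ∀ c : ℝ,
      ∫⁻ v, gammaPDF k r v * (gammaPDF 1 r (s - v) * ENNReal.ofReal ((s - v - c) ^ 2)) =
      ENNReal.ofReal C *
        ENNReal.ofReal (∫ v in (0 : ℝ)..s, (v - (s - c)) ^ 2 * v ^ (k - 1)) := fun c => by
    have hi := (integral_sq_sub_mul_rpow hk hs (s - c)).1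
    rw [intervalIntegrable_iff_integrableOn_Icc_of_le hs] at hi
    rw [intervalIntegral.integral_of_le hs, ← integral_Icc_eq_integral_Ioc,
      ofReal_integral_eq_lintegral_ofReal hi, ← lintegral_const_mul' _ _ ENNReal.ofReal_ne_top,
      ← lintegral_indicator measurableSet_Icc]
    · refine lintegral_congr fun v => ?_
      by_cases hv : v ∈ Set.Icc 0 s
      · have h1 : 0 ≤ v := hv.1
        have h2 : 0 ≤ s - v := sub_nonneg.2 hv.2
        rw [Set.indicator_of_mem hv, gammaPDF_of_nonneg h1, gammaPDF_of_nonneg h2,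
          ← ENNReal.ofReal_mul (by simp; positivity), ← ENNReal.ofReal_mul (by positivity),
          ← ENNReal.ofReal_mul hC0]
        congr 1
        rw [hC, show -(r * s) = -(r * v) + -(r * (s - v)) by ring, exp_add]
        simp only [rpow_one, Gamma_one, sub_self, rpow_zero]
        ring
      · rw [Set.indicator_of_notMem hv]
        rcases lt_or_ge v 0 with h | h
        · simp [gammaPDF_of_neg h]
        · have : s - v < 0 := by
            by_contra! h'
            exact hv ⟨h, by linarith⟩
          simp [gammaPDF_of_neg this]
    · filter_upwards [ae_restrict_mem measurableSet_Icc] with v hv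
      have := hv.1
      simp only [Pi.zero_apply]
      positivity
  rw [key, key]
  gcongr
  rw [(integral_sq_sub_mul_rpow hk hs _).2, (integral_sq_sub_mul_rpow hk hs _).2]
  rcases hs.eq_or_lt with rfl | hs
  · simp [zero_rpow hk.ne', zero_rpow (show k + 1 ≠ 0 by positivity)]
  have hsk : 0 < s ^ k := by positivity
  rw [rpow_add_one hs.ne' k]
  -- The difference of the two sides is the square of the distance to the mean, times the mass.
  have hd : 0 ≤ s ^ k / k * (a - s / (k + 1)) ^ 2 := by positivity
  rw [← sub_nonneg]
  convert hd using 1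
  field_simp
  ring

/-- If `X` is exponential with rate `r > 0` and `V` is Gamma with shape `k > 0` and rate `r`,
independent of `X`, then no Borel measurable decoder `h` of the noisy observation `X + V`
achieves mean squared error below `k/((k+1) r²)` (expectations taken as Lebesgue integrals
in `[0, ∞]`), and this bound is attained by `h(s) = s/(k+1)`. -/
theorem exp_gamma_mmse_bound
    {Ω : Type*} [MeasurableSpace Ω] (μ : Measure Ω) [IsProbabilityMeasure μ]
    (X V : Ω → ℝ) (hX : Measurable X) (hV : Measurable V)
    (r k : ℝ) (hr : 0 < r) (hk : 0 < k)
    (hindep : IndepFun X V μ)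
    (hXlaw : μ.map X = expMeasure r)
    (hVlaw : μ.map V = gammaMeasure k r) :
    (∀ h : ℝ → ℝ, Measurable h →
      ENNReal.ofReal (k / ((k + 1) * r ^ 2)) ≤
        ∫⁻ ω, ENNReal.ofReal ((X ω - h (X ω + V ω)) ^ 2) ∂μ) ∧
    ∫⁻ ω, ENNReal.ofReal ((X ω - (X ω + V ω) / (k + 1)) ^ 2) ∂μ =
      ENNReal.ofReal (k / ((k + 1) * r ^ 2)) := by
  have hopt : ∫⁻ ω, ENNReal.ofReal ((X ω - (X ω + V ω) / (k + 1)) ^ 2) ∂μ =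
      ENNReal.ofReal (k / ((k + 1) * r ^ 2)) := by
    rw [expMeasure] at hXlaw
    have moments : ∀ (Y : Ω → ℝ) (a : ℝ), Measurable Y → 0 < a → μ.map Y = gammaMeasure a r →
        Integrable Y μ ∧ Integrable (fun ω => Y ω ^ 2) μ ∧
        ∫ ω, Y ω ∂μ = a / r ∧ ∫ ω, Y ω ^ 2 ∂μ = a * (a + 1) / r ^ 2 := by
      intro Y a hY ha hlaw
      have j1 := integrable_pow_gammaMeasure ha hr 1
      have j2 := integrable_pow_gammaMeasure ha hr 2
      simp only [pow_one] at j1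
      rw [← hlaw] at j1 j2
      refine ⟨j1.comp_measurable hY, j2.comp_measurable hY, ?_, ?_⟩
      · rw [← integral_id_gammaMeasure ha hr, ← hlaw,
          integral_map hY.aemeasurable (by fun_prop)]
      · rw [← integral_sq_gammaMeasure ha hr, ← hlaw,
          integral_map hY.aemeasurable (by fun_prop)]
    obtain ⟨x1, x2, ex1, ex2⟩ := moments X 1 hX one_pos hXlaw
    obtain ⟨v1, v2, ev1, ev2⟩ := moments V k hV hk hVlaw
    have xv := hindep.integrable_mul x1 v1
    have exv : ∫ ω, (X * V) ω ∂μ = _ :=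
      hindep.integral_mul_eq_mul_integral x1.aestronglyMeasurable v1.aestronglyMeasurable
    have hexp : ∀ ω, (X ω - (X ω + V ω) / (k + 1)) ^ 2 =
        (k ^ 2 / (k + 1) ^ 2) * X ω ^ 2 - (2 * k / (k + 1) ^ 2) * (X * V) ω
          + (1 / (k + 1) ^ 2) * V ω ^ 2 := fun ω => by
      simp only [Pi.mul_apply]
      field_simp
      ring
    have y1 := x2.const_mul (k ^ 2 / (k + 1) ^ 2)
    have y2 := xv.const_mul (2 * k / (k + 1) ^ 2)
    have y3 := v2.const_mul (1 / (k + 1) ^ 2)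
    have y12 : Integrable (fun ω => (k ^ 2 / (k + 1) ^ 2) * X ω ^ 2
        - (2 * k / (k + 1) ^ 2) * (X * V) ω) μ := y1.sub y2
    rw [← ofReal_integral_eq_lintegral_ofReal _ (Filter.Eventually.of_forall fun ω => sq_nonneg _)]
    · congr 1
      simp_rw [hexp]
      rw [integral_add y12 y3, integral_sub y1 y2, integral_const_mul, integral_const_mul,
        integral_const_mul, exv, ex1, ev1, ex2, ev2]
      field_simp
      ring
    · simp_rw [hexp]
      exact y12.add y3
  refine ⟨fun h hh => ?_, hopt⟩
  rw [← hopt, mse_eq_lintegral_density μ X V hX hV r k hr hk hindep hXlaw hVlaw h hh,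
    mse_eq_lintegral_density μ X V hX hV r k hr hk hindep hXlaw hVlaw (fun s => s / (k + 1))
      (by fun_prop)]
  exact lintegral_mono fun s => inner_lintegral_le hr hk s (h s)
end

section
/- Fix λ > 0, P_T > 0, k > 0, β ≥ 0; set θ = √(P_T), α = λθ, γ = 1/k. Define, for x with |x| > β and v > 0, the decoder output x̂(x, v) = sgn(x)·( (1/α)·(γ/(γ+1))·( α(|x| − β − 1/λ) + v ) + (γ/(γ+1))·(1/λ) + β ). Then ∫_{{|x| > β}} ∫_0^∞ (x − x̂(x,v))² · (λ/2)·exp(−λ|x|) · (θ^{−k} v^{k−1} exp(−v/θ)/Γ(k)) dv dx = exp(−λβ) · 1/((γ+1)·λ²). That is, conditioned on transmission, the affine encoder/decoder pair achieves mean squared error m = 1/((γ+1)λ²). -/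
/-!
For `|x| > β` put `t = |x| - β` and `c = γ/(γ+1) = 1/(k+1)`. The offsets in the encoder and the
decoder cancel, and `x = sgn(x)·|x|`, so the squared error is `((1-c) t - (c/α) v)²`, a quadratic
polynomial in `v` and in `t`. Against the Gamma density (moments `1`, `kθ`, `k(k+1)θ²`) the
`v`-integral is a quadratic polynomial in `t`. The remaining integrand is even in `x`, and the
shift by `β` turns it into `exp(-λβ)` times the same polynomial against the exponential density of
rate `λ`, i.e. the Gamma weight of shape `1`. So both integrals are instances of
`integral_quadratic_mul_gamma_weight`.
-/

open MeasureTheory Real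

/-- Integrability follows from the value of the integral being nonzero, since the Bochner integral
of a non-integrable function is `0`. -/
lemma integrableOn_gamma_weight {a r : ℝ} (ha : 0 < a) (hr : 0 < r) :
    IntegrableOn (fun v : ℝ => v ^ (a - 1) * exp (-(r * v))) (Set.Ioi 0) := by
  by_contra h
  have h1 := integral_rpow_mul_exp_neg_mul_Ioi ha hr
  rw [integral_undef h] at h1
  have := Real.Gamma_pos_of_pos ha
  have : 0 < (1 / r) ^ a * Real.Gamma a := by positivity
  linarith

/-- Multiplying the weight by `v` raises the shape `a` by one, so the moments come from
`Γ(a + 1) = a Γ(a)`. -/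
lemma integral_quadratic_mul_gamma_weight {a r : ℝ} (ha : 0 < a) (hr : 0 < r) (A B C : ℝ) :
    ∫ v in Set.Ioi (0 : ℝ), (A + B * v + C * v ^ 2) * (v ^ (a - 1) * exp (-(r * v))) =
      (A + B * (a / r) + C * (a * (a + 1) / r ^ 2)) * ((1 / r) ^ a * Real.Gamma a) := by
  have i0 := integrableOn_gamma_weight ha hr
  have i1 := integrableOn_gamma_weight (a := a + 1) (by linarith) hr
  have i2 := integrableOn_gamma_weight (a := a + 1 + 1) (by linarith) hr
  have e : ∀ v ∈ Set.Ioi (0 : ℝ),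
      (A + B * v + C * v ^ 2) * (v ^ (a - 1) * exp (-(r * v))) =
      A * (v ^ (a - 1) * exp (-(r * v))) + B * (v ^ (a + 1 - 1) * exp (-(r * v)))
        + C * (v ^ (a + 1 + 1 - 1) * exp (-(r * v))) := by
    intro v hv
    have hv : 0 < v := hv
    have h1 : v ^ (a + 1 - 1) = v ^ (a - 1) * v := by
      rw [← rpow_add_one hv.ne']; ring_nf
    have h2 : v ^ (a + 1 + 1 - 1) = v ^ (a - 1) * v * v := by
      rw [← h1, ← rpow_add_one hv.ne']; ring_nf
    rw [h1, h2]; ring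
  rw [setIntegral_congr_fun measurableSet_Ioi e,
    integral_add (by exact (i0.const_mul A).add (i1.const_mul B)) (i2.const_mul C),
    integral_add (i0.const_mul A) (i1.const_mul B), integral_const_mul, integral_const_mul,
    integral_const_mul, integral_rpow_mul_exp_neg_mul_Ioi ha hr,
    integral_rpow_mul_exp_neg_mul_Ioi (by linarith) hr,
    integral_rpow_mul_exp_neg_mul_Ioi (by linarith) hr,
    Real.Gamma_add_one (by linarith : a + 1 ≠ 0), Real.Gamma_add_one ha.ne',
    rpow_add_one (y := a + 1) (by positivity), rpow_add_one (y := a) (by positivity)]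
  field_simp

/-- An even integrand over `{β < |x|}` folds onto a half-line, shifted to start at `0`. -/
lemma setIntegral_lt_abs {β : ℝ} (hβ : 0 ≤ β) (g : ℝ → ℝ) :
    ∫ x in {x : ℝ | β < |x|}, g |x| = 2 * ∫ t in Set.Ioi (0 : ℝ), g (t + β) := by
  have hm : MeasurableSet {x : ℝ | β < |x|} := measurableSet_lt measurable_const measurable_abs
  have h1 : ∀ x : ℝ, {x : ℝ | β < |x|}.indicator (fun x => g |x|) x =
      (Set.Ioi β).indicator g |x| := fun x => by
    simp [Set.indicator_apply]
  rw [← integral_indicator hm, funext h1, integral_comp_abs (f := (Set.Ioi β).indicator g),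
    setIntegral_indicator measurableSet_Ioi, Set.Ioi_inter_Ioi, max_eq_right hβ]
  have h2 := (measurePreserving_add_right volume β).setIntegral_preimage_emb
    (measurableEmbedding_addRight β) g (Set.Ioi β)
  rw [← h2]
  simp

/-- The Gamma-noise average of the squared error `(p - q v)²`. -/
lemma integral_sq_mul_gamma_density {k θ : ℝ} (hk : 0 < k) (hθ : 0 < θ) (w p q : ℝ) :
    ∫ v in Set.Ioi (0 : ℝ), (p - q * v) ^ 2 * w *
        (θ ^ (-k) * v ^ (k - 1) * Real.exp (-v / θ) / Real.Gamma k) =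
      (p ^ 2 - 2 * p * q * (k * θ) + q ^ 2 * (k * (k + 1) * θ ^ 2)) * w := by
  have hG := (Real.Gamma_pos_of_pos hk).ne'
  have e : ∀ v : ℝ, (p - q * v) ^ 2 * w *
        (θ ^ (-k) * v ^ (k - 1) * Real.exp (-v / θ) / Real.Gamma k) =
      (w * θ ^ (-k) / Real.Gamma k) * ((p ^ 2 + (-2 * p * q) * v + q ^ 2 * v ^ 2) *
        (v ^ (k - 1) * exp (-(θ⁻¹ * v)))) := fun v => by
    rw [show -v / θ = -(θ⁻¹ * v) by ring]; ring
  simp_rw [e]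
  rw [integral_const_mul, integral_quadratic_mul_gamma_weight hk (inv_pos.2 hθ), one_div, inv_inv,
    rpow_neg hθ.le]
  have := (rpow_pos_of_pos hθ k).ne'
  field_simp
  ring

/-- Conditioned on transmission (`|x| > β`), the affine encoder/decoder pair for a Laplacian
source over an additive Gamma-noise channel achieves mean squared error `1/((γ+1)λ²)`. -/
theorem affine_codec_conditional_mse (l PT k β : ℝ)
    (hl : 0 < l) (hPT : 0 < PT) (hk : 0 < k) (hβ : 0 ≤ β)
    (θ α γ : ℝ) (hθ : θ = Real.sqrt PT) (hα : α = l * θ) (hγ : γ = 1 / k) :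
    ∫ x in {x : ℝ | β < |x|}, ∫ v in Set.Ioi (0 : ℝ),
        (x - Real.sign x *
            ((1 / α) * (γ / (γ + 1)) * (α * (|x| - β - 1 / l) + v) +
              (γ / (γ + 1)) * (1 / l) + β)) ^ 2 *
          ((l / 2) * Real.exp (-l * |x|)) *
          (θ ^ (-k) * v ^ (k - 1) * Real.exp (-v / θ) / Real.Gamma k) =
      Real.exp (-l * β) * (1 / ((γ + 1) * l ^ 2)) := by
  have hθ0 : 0 < θ := hθ ▸ Real.sqrt_pos.2 hPT
  have hα0 : 0 < α := hα ▸ mul_pos hl hθ0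
  have hc : γ / (γ + 1) = 1 / (k + 1) := by rw [hγ]; field_simp; ring
  have hm : MeasurableSet {x : ℝ | β < |x|} := measurableSet_lt measurable_const measurable_abs
  obtain ⟨g, hg⟩ : ∃ g : ℝ → ℝ, g = fun y : ℝ => ((k / (k + 1) * (y - β)) ^ 2
        - 2 * (k / (k + 1) * (y - β)) * (1 / (α * (k + 1))) * (k * θ)
        + (1 / (α * (k + 1))) ^ 2 * (k * (k + 1) * θ ^ 2)) * ((l / 2) * exp (-l * y)) := ⟨_, rfl⟩
  have e : ∀ x ∈ {x : ℝ | β < |x|}, (∫ v in Set.Ioi (0 : ℝ),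
        (x - Real.sign x *
            ((1 / α) * (γ / (γ + 1)) * (α * (|x| - β - 1 / l) + v) +
              (γ / (γ + 1)) * (1 / l) + β)) ^ 2 *
          ((l / 2) * Real.exp (-l * |x|)) *
          (θ ^ (-k) * v ^ (k - 1) * Real.exp (-v / θ) / Real.Gamma k)) =
      g |x| := by
    intro x hx
    have hx0 : x ≠ 0 := abs_pos.1 (hβ.trans_lt hx)
    -- `β ≥ 0` excludes `x = 0`, so `sgn x = ±1` and only `|x|` matters.
    have hs : ∀ z : ℝ, (x - Real.sign x * z) ^ 2 = (|x| - z) ^ 2 := fun z => by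
      rcases lt_or_gt_of_ne hx0 with h | h
      · rw [Real.sign_of_neg h, abs_of_neg h]; ring
      · rw [Real.sign_of_pos h, abs_of_pos h]; ring
    have hz : ∀ v : ℝ, |x| - ((1 / α) * (γ / (γ + 1)) * (α * (|x| - β - 1 / l) + v) +
        (γ / (γ + 1)) * (1 / l) + β) =
        k / (k + 1) * (|x| - β) - 1 / (α * (k + 1)) * v := fun v => by
      rw [hc]; field_simp; ring
    simp_rw [hs, hz]
    rw [hg]
    exact integral_sq_mul_gamma_density hk hθ0 _ _ _
  rw [setIntegral_congr_fun hm e, setIntegral_lt_abs hβ]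
  -- The factor `t ^ (1 - 1) = 1` exhibits the exponential density as a Gamma weight of shape `1`.
  have e2 : ∀ t : ℝ, g (t + β) =
      (l / 2 * exp (-l * β)) * (((1 / (α * (k + 1))) ^ 2 * (k * (k + 1) * θ ^ 2)
        + (-2 * (k / (k + 1)) * (1 / (α * (k + 1))) * (k * θ)) * t
        + (k / (k + 1)) ^ 2 * t ^ 2) * (t ^ ((1 : ℝ) - 1) * exp (-(l * t)))) := fun t => by
    rw [hg]; beta_reduce
    rw [show -l * (t + β) = -l * β + -(l * t) by ring, exp_add, sub_self, rpow_zero]; ring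
  simp_rw [e2]
  rw [integral_const_mul, integral_quadratic_mul_gamma_weight one_pos hl, rpow_one, Gamma_one,
    hγ, hα]
  field_simp
  ring
end

section
/- Fix λ > 0, P_T > 0, k > 0, β ≥ 0, c ≥ 0; set θ = √(P_T), α = λθ, γ = 1/k, m = 1/((γ+1)·λ²). With the threshold-β scheduling policy U = 1{|X| > β}, the affine encoder Y = α|X| − αβ − α/λ on {|X| > β}, the decoder X̂ = sgn(X)·((1/α)(γ/(γ+1))(Y+V) + (γ/(γ+1))λ⁻¹ + β) on {|X| > β} and X̂ = 0 on {|X| ≤ β}, the one-stage expected cost satisfies E[ c·U + (X − X̂)² ] = ∫_{−β}^{β} x²·(λ/2)e^{−λ|x|} dx + (c + m)·e^{−λβ}, where X has the Laplace density (λ/2)e^{−λ|x|} and V is independent Gamma with shape k and scale θ. -/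
open MeasureTheory Real

/-!
On the event `|X| > β` write `|X| = T + β`. The offsets of encoder and decoder cancel, and with
`γ = 1/k` the squared error becomes `(k/(k+1) · T - V/((k+1)α))²`, where `V/α` is Gamma with
shape `k` and rate `λ`. By memorylessness `T` is exponential with rate `λ`, independent of `V`.
The error has mean zero, so its second moment is its variance
`(k² + k)/((k+1)²λ²) = 1/((γ+1)λ²) = m`. On `|X| ≤ β` the error is `X²`.

Both the integral over `v` and the integral over `t` are moments of degree at most two of a
Gamma law (the exponential law being the shape `1` case), so `gamma_quadratic` computes both.
-/

/-- The expectation of a quadratic polynomial under an unnormalised Gamma density with shape `k`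
and rate `r`, together with integrability. -/
lemma gamma_quadratic {k r : ℝ} (hk : 0 < k) (hr : 0 < r) (p q s : ℝ) :
    IntegrableOn (fun v : ℝ => (p + q * v + s * v ^ 2) * (v ^ (k - 1) * exp (-(r * v))))
      (Set.Ioi 0) ∧
    ∫ v in Set.Ioi (0 : ℝ), (p + q * v + s * v ^ 2) * (v ^ (k - 1) * exp (-(r * v))) =
      (p + q * (k / r) + s * (k * (k + 1) / r ^ 2)) * ((1 / r) ^ k * Gamma k) := by
  have hint : ∀ a : ℝ, 0 < a →
      IntegrableOn (fun v : ℝ => v ^ (a - 1) * exp (-(r * v))) (Set.Ioi 0) := by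
    intro a ha
    have hG := Gamma_pos_of_pos ha
    exact .of_integral_ne_zero (by rw [integral_rpow_mul_exp_neg_mul_Ioi ha hr]; positivity)
  have h0 := hint k hk
  have h1 := hint (k + 1) (by linarith)
  have h2 := hint (k + 1 + 1) (by linarith)
  have hexp : Set.EqOn
      (fun v : ℝ => (p + q * v + s * v ^ 2) * (v ^ (k - 1) * exp (-(r * v))))
      (fun v : ℝ => p * (v ^ (k - 1) * exp (-(r * v))) + q * (v ^ (k + 1 - 1) * exp (-(r * v)))
        + s * (v ^ (k + 1 + 1 - 1) * exp (-(r * v)))) (Set.Ioi 0) := by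
    intro v hv
    have hv : 0 < v := hv
    have e1 : v ^ (k + 1 - 1) = v ^ (k - 1) * v := by
      rw [show k + 1 - 1 = (k - 1) + 1 by ring, rpow_add_one hv.ne']
    have e2 : v ^ (k + 1 + 1 - 1) = v ^ (k - 1) * v * v := by
      rw [show k + 1 + 1 - 1 = (k - 1) + 1 + 1 by ring, rpow_add_one hv.ne', rpow_add_one hv.ne']
    simp only [e1, e2]
    ring
  have h01 := (h0.const_mul p).add (h1.const_mul q)
  refine ⟨IntegrableOn.congr_fun (h01.add (h2.const_mul s)) hexp.symm measurableSet_Ioi, ?_⟩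
  rw [setIntegral_congr_fun measurableSet_Ioi hexp]
  have step1 := integral_add h01 (h2.const_mul s)
  have step2 := integral_add (h0.const_mul p) (h1.const_mul q)
  simp only [Pi.add_apply] at step1
  rw [step1, step2]
  simp only [integral_const_mul]
  have hr' : 1 / r ≠ 0 := by positivity
  rw [integral_rpow_mul_exp_neg_mul_Ioi hk hr,
    integral_rpow_mul_exp_neg_mul_Ioi (by linarith : 0 < k + 1) hr,
    integral_rpow_mul_exp_neg_mul_Ioi (by linarith : 0 < k + 1 + 1) hr,
    Gamma_add_one (by linarith : k + 1 ≠ 0), Gamma_add_one hk.ne',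
    rpow_add_one hr' (k + 1), rpow_add_one hr' k]
  field_simp

/-- `gamma_quadratic` for the normalised density with shape `k` and scale `θ`. -/
lemma gamma_density_quadratic {k θ : ℝ} (hk : 0 < k) (hθ : 0 < θ) (p q s : ℝ) :
    ∫ v in Set.Ioi (0 : ℝ), (p + q * v + s * v ^ 2) *
        (θ ^ (-k) * v ^ (k - 1) * exp (-v / θ) / Gamma k) =
      p + q * (k * θ) + s * (k * (k + 1) * θ ^ 2) := by
  have hG := (Gamma_pos_of_pos hk).ne'
  have hpow : (θ ^ k) ≠ 0 := (rpow_pos_of_pos hθ k).ne'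
  have h := (gamma_quadratic hk (inv_pos.mpr hθ) p q s).2
  calc _ = ∫ v in Set.Ioi (0 : ℝ), (θ ^ (-k) / Gamma k) *
        ((p + q * v + s * v ^ 2) * (v ^ (k - 1) * exp (-(θ⁻¹ * v)))) := by
        congr 1
        ext v
        rw [show -v / θ = -(θ⁻¹ * v) by field_simp]
        ring
    _ = _ := by
        rw [integral_const_mul, h, rpow_neg hθ.le, one_div, inv_inv]
        field_simp

/-- Splitting of an even integral over `ℝ` at a threshold `β ≥ 0`, with the tail shifted to
start at `0`. -/
lemma integral_even_split {β : ℝ} (hβ : 0 ≤ β) {f g : ℝ → ℝ} (hf : Continuous f)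
    (hg : IntegrableOn (fun t => g (t + β)) (Set.Ioi 0)) :
    ∫ x : ℝ, (if β < |x| then g |x| else f |x|) =
      (∫ x in (-β)..β, f |x|) + 2 * ∫ t in Set.Ioi (0 : ℝ), g (t + β) := by
  have hmp := measurePreserving_add_right volume β
  have hemb := (MeasurableEquiv.addRight β).measurableEmbedding
  have hpre : (fun t : ℝ => t + β) ⁻¹' Set.Ioi β = Set.Ioi 0 := by
    ext t; simp
  have hgI : IntegrableOn g (Set.Ioi β) := by
    rw [← hmp.integrableOn_comp_preimage hemb, hpre]
    exact hg
  have hshift : ∫ t in Set.Ioi (0 : ℝ), g (t + β) = ∫ y in Set.Ioi β, g y := by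
    rw [← hmp.setIntegral_preimage_emb hemb g, hpre]
  have hcongr1 : Set.EqOn f (fun y => if β < y then g y else f y) (Set.Ioc 0 β) :=
    fun y hy => (if_neg (not_lt.mpr hy.2)).symm
  have hcongr2 : Set.EqOn g (fun y => if β < y then g y else f y) (Set.Ioi β) :=
    fun y hy => (if_pos hy).symm
  have hfI : IntegrableOn f (Set.Ioc 0 β) :=
    (hf.intervalIntegrable 0 β).1
  have hcf : Continuous fun x : ℝ => f |x| := hf.comp continuous_abs
  have hneg : ∫ x in (-β)..0, f |x| = ∫ x in (0 : ℝ)..β, f |x| := by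
    have := intervalIntegral.integral_comp_neg (a := 0) (b := β) (fun x : ℝ => f |x|)
    simpa using this.symm
  have habs : ∫ x in (0 : ℝ)..β, f |x| = ∫ x in Set.Ioc 0 β, f x := by
    rw [intervalIntegral.integral_of_le hβ]
    exact setIntegral_congr_fun measurableSet_Ioc fun x hx => by simp only [abs_of_pos hx.1]
  rw [integral_comp_abs (f := fun y => if β < y then g y else f y), ← Set.Ioc_union_Ioi_eq_Ioi hβ,
    setIntegral_union (Set.Ioc_disjoint_Ioi le_rfl) measurableSet_Ioi
      (hfI.congr_fun hcongr1 measurableSet_Ioc) (hgI.congr_fun hcongr2 measurableSet_Ioi),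
    ← setIntegral_congr_fun measurableSet_Ioc hcongr1,
    ← setIntegral_congr_fun measurableSet_Ioi hcongr2, Set.Ioc_union_Ioi_eq_Ioi hβ, hshift,
    ← intervalIntegral.integral_add_adjacent_intervals (hcf.intervalIntegrable (-β) 0)
      (hcf.intervalIntegrable 0 β), hneg, habs]
  ring

/-- One-stage expected cost of the threshold-`β` scheduling policy with the optimal affine
encoder/decoder: with `X` Laplace(`λ`) and `V` an independent Gamma(shape `k`, scale `θ`)
channel noise, `θ = √P_T`, `α = λθ`, `γ = 1/k`, `m = 1/((γ+1)λ²)`, the policy `U = 1{|X|>β}`,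
encoder `Y = α|X| - αβ - α/λ` on `{|X|>β}`, decoder
`X̂ = sgn X · ((1/α)(γ/(γ+1))(Y+V) + (γ/(γ+1))/λ + β)` on `{|X|>β}` and `X̂ = 0` otherwise,
satisfies `E[cU + (X - X̂)²] = ∫_{-β}^{β} x² (λ/2)e^{-λ|x|} dx + (c+m) e^{-λβ}`. -/
theorem one_stage_expected_cost (l PT k β c : ℝ)
    (hl : 0 < l) (hPT : 0 < PT) (hk : 0 < k) (hβ : 0 ≤ β) (hc : 0 ≤ c)
    (θ α γ m : ℝ) (hθ : θ = Real.sqrt PT) (hα : α = l * θ) (hγ : γ = 1 / k)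
    (hm : m = 1 / ((γ + 1) * l ^ 2)) :
    ∫ x : ℝ, (∫ v in Set.Ioi (0 : ℝ),
        (c * (if β < |x| then (1 : ℝ) else 0) +
          (x - (if β < |x| then
              Real.sign x *
                ((1 / α) * (γ / (γ + 1)) * ((α * |x| - α * β - α / l) + v) +
                  (γ / (γ + 1)) * (1 / l) + β)
            else 0)) ^ 2) *
          (θ ^ (-k) * v ^ (k - 1) * Real.exp (-v / θ) / Real.Gamma k)) *
        ((l / 2) * Real.exp (-l * |x|)) =
      (∫ x in (-β)..β, x ^ 2 * ((l / 2) * Real.exp (-l * |x|))) +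
        (c + m) * Real.exp (-l * β) := by
  have hθ0 : 0 < θ := hθ ▸ Real.sqrt_pos.mpr hPT
  have hk1 : (k + 1) ≠ 0 := by positivity
  have hg1 : γ / (γ + 1) = 1 / (k + 1) := by
    rw [hγ]; field_simp; ring
  have hm' : m = k / ((k + 1) * l ^ 2) := by
    rw [hm, hγ]; field_simp; ring
  -- `a` is the fraction of the excess `T = |X| - β` that the decoder misses.
  obtain ⟨a, ha⟩ : ∃ a, a = k / (k + 1) := ⟨_, rfl⟩
  have hinner : ∀ x : ℝ, (∫ v in Set.Ioi (0 : ℝ),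
        (c * (if β < |x| then (1 : ℝ) else 0) +
          (x - (if β < |x| then
              Real.sign x *
                ((1 / α) * (γ / (γ + 1)) * ((α * |x| - α * β - α / l) + v) +
                  (γ / (γ + 1)) * (1 / l) + β)
            else 0)) ^ 2) *
          (θ ^ (-k) * v ^ (k - 1) * Real.exp (-v / θ) / Real.Gamma k)) *
        ((l / 2) * Real.exp (-l * |x|)) =
      if β < |x| then
        (c + a / l ^ 2 + (-2 * a ^ 2 / l) * (|x| - β) + a ^ 2 * (|x| - β) ^ 2) *
          ((l / 2) * Real.exp (-l * |x|))
      else |x| ^ 2 * ((l / 2) * Real.exp (-l * |x|)) := by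
    intro x
    split_ifs with hx
    · congr 1
      have hx0 : x ≠ 0 := abs_pos.mp (hβ.trans_lt hx)
      have hs2 : Real.sign x ^ 2 = 1 := by
        rcases Real.sign_apply_eq_of_ne_zero x hx0 with h | h <;> rw [h] <;> norm_num
      have hsx : Real.sign x * |x| = x := by
        rcases lt_or_gt_of_ne hx0 with h | h
        · rw [Real.sign_of_neg h, abs_of_neg h]; ring
        · rw [Real.sign_of_pos h, abs_of_pos h]; ring
      have herr : ∀ v : ℝ, c * 1 + (x - Real.sign x *
                ((1 / α) * (γ / (γ + 1)) * ((α * |x| - α * β - α / l) + v) +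
                  (γ / (γ + 1)) * (1 / l) + β)) ^ 2 =
          (c + a ^ 2 * (|x| - β) ^ 2) + (-2 * a * (|x| - β) / ((k + 1) * (l * θ))) * v
            + (1 / ((k + 1) * (l * θ)) ^ 2) * v ^ 2 := by
        intro v
        have hin : (1 / α) * (γ / (γ + 1)) * ((α * |x| - α * β - α / l) + v) +
            (γ / (γ + 1)) * (1 / l) + β
            = |x| - (a * (|x| - β) - v / ((k + 1) * (l * θ))) := by
          rw [hg1, hα, ha]; field_simp; ring
        rw [hin, show x - Real.sign x * (|x| - (a * (|x| - β) - v / ((k + 1) * (l * θ))))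
          = Real.sign x * (a * (|x| - β) - v / ((k + 1) * (l * θ))) by
            rw [mul_sub, hsx]; ring, mul_pow, hs2]
        field_simp
        ring
      simp_rw [herr]
      rw [gamma_density_quadratic hk hθ0, ha]
      field_simp
      ring
    · congr 1
      have h := gamma_density_quadratic hk hθ0 (x ^ 2) 0 0
      simpa using h
  simp_rw [hinner]
  -- Memorylessness: after the shift, the Laplace density factors as
  -- `e^{-λβ}/2` times the exponential density.
  obtain ⟨htI, htV⟩ := gamma_quadratic one_pos hl (c + a / l ^ 2) (-2 * a ^ 2 / l) (a ^ 2)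
  have hshift : (fun t : ℝ =>
      (c + a / l ^ 2 + (-2 * a ^ 2 / l) * ((t + β) - β) + a ^ 2 * ((t + β) - β) ^ 2) *
          ((l / 2) * Real.exp (-l * (t + β)))) = fun t : ℝ => (l / 2 * Real.exp (-l * β)) *
      ((c + a / l ^ 2 + (-2 * a ^ 2 / l) * t + a ^ 2 * t ^ 2) *
        (t ^ ((1 : ℝ) - 1) * Real.exp (-(l * t)))) := by
    ext t
    rw [show -l * (t + β) = -l * β + -(l * t) by ring, Real.exp_add, sub_self, rpow_zero]
    ring
  rw [integral_even_split hβ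
    (f := fun y => y ^ 2 * ((l / 2) * Real.exp (-l * y)))
    (g := fun y => (c + a / l ^ 2 + (-2 * a ^ 2 / l) * (y - β) + a ^ 2 * (y - β) ^ 2) *
          ((l / 2) * Real.exp (-l * y))) (by fun_prop)
    (by rw [hshift]; exact htI.const_mul _)]
  rw [hshift, integral_const_mul, htV]
  simp only [sq_abs, rpow_one, Gamma_one]
  congr 1
  rw [hm', ha]
  field_simp
  ring
end

section
/- Fix λ > 0 and a > 0, and define G : [0, ∞) → ℝ by G(β) = ∫_{−β}^{β} x²·(λ/2)·exp(−λ|x|) dx + a·exp(−λβ). Then G attains its minimum over [0, ∞) uniquely at β* = √a; that is, G(β) ≥ G(√a) for all β ≥ 0, with equality only at β = √a. Moreover, the minimum value is G(√a) = 2/λ² − (2/λ)·(√a + 1/λ)·exp(−λ√a). -/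
open MeasureTheory Real

/-!
The integrand is even, and on `[0, ∞)` an antiderivative of `l x² e^{-lx}` is
`-(x² + 2x/l + 2/l²) e^{-lx}`. Hence on `[0, ∞)` the cost has the closed form
`2/l² + (a - β² - 2β/l - 2/l²) e^{-lβ}` (`integral_sq_mul_laplace`, `closedCost`), whose derivative
`l (β² - a) e^{-lβ}` is negative on `(0, √a)` and positive on `(√a, ∞)`.
The cost is therefore strictly decreasing and then strictly increasing, with its only minimum
at `√a`; the terms `a` and `β²` cancel there, which leaves the stated value.
-/

lemma hasDerivAt_antideriv (l : ℝ) (hl : 0 < l) (a x : ℝ) :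
    HasDerivAt (fun x : ℝ => (a - x ^ 2 - 2 * x / l - 2 / l ^ 2) * Real.exp (-l * x))
      (l * (x ^ 2 - a) * Real.exp (-l * x)) x := by
  have h1 : HasDerivAt (fun x : ℝ => a - x ^ 2 - 2 * x / l - 2 / l ^ 2)
      (-(2 * x) - 2 / l) x := by
    have h := ((((hasDerivAt_id x).pow 2).const_sub a).sub
      (((hasDerivAt_id x).const_mul 2).div_const l)).sub_const (2 / l ^ 2)
    exact h.congr_deriv (by simp)
  have h2 : HasDerivAt (fun x : ℝ => Real.exp (-l * x)) (Real.exp (-l * x) * -l) x := by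
    simpa using ((hasDerivAt_id x).const_mul (-l)).exp
  refine (h1.mul h2).congr_deriv ?_
  field_simp
  ring

/-- Truncated second moment of the Laplace density. -/
lemma integral_sq_mul_laplace (l : ℝ) (hl : 0 < l) (β : ℝ) (hβ : 0 ≤ β) :
    (∫ x in (-β)..β, x ^ 2 * ((l / 2) * Real.exp (-l * |x|))) =
      2 / l ^ 2 - (β ^ 2 + 2 * β / l + 2 / l ^ 2) * Real.exp (-l * β) := by
  set f : ℝ → ℝ := fun x => x ^ 2 * ((l / 2) * Real.exp (-l * |x|)) with hf
  have hc : Continuous f := by fun_prop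
  have heven : (∫ x in (-β)..0, f x) = ∫ x in (0 : ℝ)..β, f x := by
    have h := intervalIntegral.integral_comp_neg (a := 0) (b := β) f
    rw [neg_zero] at h
    rw [← h]
    exact intervalIntegral.integral_congr fun x _ => by simp [hf]
  have hpos : (∫ x in (0 : ℝ)..β, f x) =
      ∫ x in (0 : ℝ)..β, (1 / 2) * (l * (x ^ 2 - 0) * Real.exp (-l * x)) := by
    refine intervalIntegral.integral_congr fun x hx => ?_
    rw [Set.uIcc_of_le hβ] at hx
    simp only [hf, abs_of_nonneg hx.1]
    ring
  rw [← intervalIntegral.integral_add_adjacent_intervals (hc.intervalIntegrable _ 0)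
    (hc.intervalIntegrable 0 _), heven, hpos, intervalIntegral.integral_const_mul,
    intervalIntegral.integral_eq_sub_of_hasDerivAt
      (fun x _ => hasDerivAt_antideriv l hl 0 x)
      ((by fun_prop : Continuous fun x : ℝ =>
        l * (x ^ 2 - 0) * Real.exp (-l * x)).intervalIntegrable _ _)]
  simp
  ring

/-- The one-stage cost with its integral evaluated; it agrees with the cost for `β ≥ 0` only. -/
noncomputable def closedCost (l a β : ℝ) : ℝ :=
  2 / l ^ 2 + (a - β ^ 2 - 2 * β / l - 2 / l ^ 2) * Real.exp (-l * β)

lemma hasDerivAt_closedCost (l : ℝ) (hl : 0 < l) (a x : ℝ) :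
    HasDerivAt (closedCost l a) (l * (x ^ 2 - a) * Real.exp (-l * x)) x :=
  (hasDerivAt_antideriv l hl a x).const_add _

lemma closedCost_strictAntiOn (l a : ℝ) (hl : 0 < l) :
    StrictAntiOn (closedCost l a) (Set.Icc 0 (Real.sqrt a)) := by
  refine strictAntiOn_of_deriv_neg (convex_Icc _ _)
    (fun x _ => (hasDerivAt_closedCost l hl a x).continuousAt.continuousWithinAt) fun x hx => ?_
  rw [interior_Icc] at hx
  rw [(hasDerivAt_closedCost l hl a x).deriv]
  have : x ^ 2 < a := (Real.lt_sqrt hx.1.le).1 hx.2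
  exact mul_neg_of_neg_of_pos (mul_neg_of_pos_of_neg hl (by linarith)) (Real.exp_pos _)

lemma closedCost_strictMonoOn (l a : ℝ) (hl : 0 < l) :
    StrictMonoOn (closedCost l a) (Set.Ici (Real.sqrt a)) := by
  refine strictMonoOn_of_deriv_pos (convex_Ici _)
    (fun x _ => (hasDerivAt_closedCost l hl a x).continuousAt.continuousWithinAt) fun x hx => ?_
  rw [interior_Ici] at hx
  rw [(hasDerivAt_closedCost l hl a x).deriv]
  have : a < x ^ 2 := Real.lt_sq_of_sqrt_lt hx
  exact mul_pos (mul_pos hl (by linarith)) (Real.exp_pos _)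

/-- For `λ > 0` and `a > 0`, the one-stage cost
`G(β) = ∫_{-β}^{β} x² (λ/2)e^{-λ|x|} dx + a e^{-λβ}` attains its minimum over `[0, ∞)`
uniquely at `β* = √a`, with minimum value `2/λ² - (2/λ)(√a + 1/λ) e^{-λ√a}`. -/
theorem one_stage_optimal_threshold (l a : ℝ) (hl : 0 < l) (ha : 0 < a)
    (G : ℝ → ℝ)
    (hG : ∀ β, G β = (∫ x in (-β)..β, x ^ 2 * ((l / 2) * Real.exp (-l * |x|))) +
      a * Real.exp (-l * β)) :
    (∀ β, 0 ≤ β → G (Real.sqrt a) ≤ G β) ∧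
    (∀ β, 0 ≤ β → G β = G (Real.sqrt a) → β = Real.sqrt a) ∧
    G (Real.sqrt a) =
      2 / l ^ 2 - (2 / l) * (Real.sqrt a + 1 / l) * Real.exp (-l * Real.sqrt a) := by
  have hs : 0 ≤ Real.sqrt a := Real.sqrt_nonneg a
  have hGc : ∀ β, 0 ≤ β → G β = closedCost l a β := fun β hβ => by
    rw [hG, integral_sq_mul_laplace l hl β hβ, closedCost]
    ring
  have hlt : ∀ β, 0 ≤ β → β ≠ Real.sqrt a → G (Real.sqrt a) < G β := fun β hβ hne => by
    rw [hGc _ hs, hGc _ hβ]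
    rcases lt_or_gt_of_ne hne with h | h
    · exact closedCost_strictAntiOn l a hl ⟨hβ, h.le⟩ ⟨hs, le_rfl⟩ h
    · exact closedCost_strictMonoOn l a hl Set.self_mem_Ici h.le h
  refine ⟨fun β hβ => ?_, fun β hβ h => ?_, ?_⟩
  · by_cases hne : β = Real.sqrt a
    · rw [hne]
    · exact (hlt β hβ hne).le
  · by_contra hne
    exact (hlt β hβ hne).ne' h
  · rw [hGc _ hs, closedCost, Real.sq_sqrt ha.le]
    ring
end

section
/- Fix λ > 0, γ > 0, T ∈ ℕ, and set m = 1/((γ+1)·λ²). Define J on {1, …, T+1} × ℕ backward-recursively by: J(T+1, E) = 0 for all E; J(t, 0) = J(t+1, 0) + 2/λ²; and for E ≥ 1, J(t, E) = J(t+1, E) + 2/λ² − (2/λ)·(β_t(E) + 1/λ)·exp(−λ·β_t(E)), where β_t(E) = √( max(J(t+1, E−1) − J(t+1, E), 0) + m ). Then for all 1 ≤ t ≤ T+1 and all E ≥ 1, J(t, E−1) ≥ J(t, E). Consequently the opportunity cost c_t(E) = J(t+1, E−1) − J(t+1, E) is nonnegative for all t and E ≥ 1 (so the truncation by max(·, 0)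 in the definition of β_t(E) is never active), and in particular β_t(E) = √(c_t(E) + m) ≥ √m. -/
/-!
Write `h b = (2/l)(b + 1/l) e^{-l b}`, so that the recursion reads
`J (n+1) (E+1) = J n (E+1) + 2/l² - h (β)` with `β = √(max c 0 + m)`, `c = J n E - J n (E+1)`.
Since `h' b = -2 b e^{-l b}`, on `[0, ∞)` the function `h` is antitone, while `b ↦ b² + h b`, whose
derivative is `2 b (1 - e^{-l b})`, is monotone.  As a function of `c ≥ 0`, the cost
`2/l² - h (√(c + m))` is therefore nondecreasing and grows at most as fast as `c`
(`stageLoss_antitone`, `stageLoss_sub_le`).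

Monotonicity of `J n` in `E` follows by induction on `n`: the new difference is
`c_{n+1}(E) = c_n(E) + (cost at E - 1) - (cost at E)`.  The cost at `E - 1` is at least the cost at
`c = 0` (for no remaining opportunities it is the maximal value `2/l²`), and the cost at `E` exceeds
the cost at `c = 0` by at most `c_n(E)`, so `c_{n+1}(E) ≥ 0`.
-/

open MeasureTheory Real

/-- Dynamic-programming value function of the finite-horizon sensor scheduling and remote
estimation problem, indexed by the number `n` of remaining stages (stage `t` of a horizon-`T`
problem corresponds to `n = T + 1 - t`, so `n = 0` is `t = T + 1`) and the number `E` of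
transmission opportunities left: `J(T+1, E) = 0`; `J(t, 0) = J(t+1, 0) + 2/λ²`; and for
`E ≥ 1`, `J(t, E) = J(t+1, E) + 2/λ² - (2/λ)(β_t(E) + 1/λ) e^{-λ β_t(E)}` with
`β_t(E) = √(max (J(t+1, E-1) - J(t+1, E)) 0 + m)` and `m = 1/((γ+1)λ²)`. -/
noncomputable def valueJ (l γ : ℝ) : ℕ → ℕ → ℝ
  | 0, _ => 0
  | n + 1, 0 => valueJ l γ n 0 + 2 / l ^ 2
  | n + 1, E + 1 =>
      valueJ l γ n (E + 1) + 2 / l ^ 2 -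
        (2 / l) *
          (Real.sqrt (max (valueJ l γ n E - valueJ l γ n (E + 1)) 0 +
              1 / ((γ + 1) * l ^ 2)) + 1 / l) *
          Real.exp (-l * Real.sqrt (max (valueJ l γ n E - valueJ l γ n (E + 1)) 0 +
              1 / ((γ + 1) * l ^ 2)))

/-- The reduction `(2/l)(b + 1/l) e^{-l b}` of the stage cost below the source variance `2/l²`
under threshold `b`. -/
noncomputable def stageLoss (l b : ℝ) : ℝ := (2 / l) * (b + 1 / l) * Real.exp (-l * b)

lemma stageLoss_hasDerivAt {l : ℝ} (hl : 0 < l) (b : ℝ) :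
    HasDerivAt (stageLoss l) (-(2 * b * Real.exp (-l * b))) b := by
  have h1 : HasDerivAt (fun b : ℝ => (2 / l) * (b + 1 / l)) (2 / l * 1) b :=
    ((hasDerivAt_id b).add_const (1 / l)).const_mul (2 / l)
  have h2 : HasDerivAt (fun b : ℝ => Real.exp (-l * b)) (Real.exp (-l * b) * (-l * 1)) b :=
    ((hasDerivAt_id b).const_mul (-l)).exp
  refine (h1.mul h2).congr_deriv ?_
  field_simp
  ring

lemma stageLoss_nonneg {l b : ℝ} (hl : 0 < l) (hb : 0 ≤ b) : 0 ≤ stageLoss l b := by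
  unfold stageLoss
  positivity

lemma stageLoss_antitoneOn {l : ℝ} (hl : 0 < l) : AntitoneOn (stageLoss l) (Set.Ici 0) := by
  refine antitoneOn_of_deriv_nonpos (convex_Ici 0)
    (fun b _ => (stageLoss_hasDerivAt hl b).continuousAt.continuousWithinAt)
    (fun b _ => (stageLoss_hasDerivAt hl b).differentiableAt.differentiableWithinAt)
    fun b hb => ?_
  rw [interior_Ici, Set.mem_Ioi] at hb
  rw [(stageLoss_hasDerivAt hl b).deriv, neg_nonpos]
  positivity

lemma sq_add_stageLoss_monotoneOn {l : ℝ} (hl : 0 < l) :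
    MonotoneOn (fun b => b ^ 2 + stageLoss l b) (Set.Ici 0) := by
  have hd : ∀ b : ℝ, HasDerivAt (fun b => b ^ 2 + stageLoss l b)
      (2 * b * (1 - Real.exp (-l * b))) b := fun b =>
    ((hasDerivAt_pow 2 b).add (stageLoss_hasDerivAt hl b)).congr_deriv (by norm_num; ring)
  refine monotoneOn_of_deriv_nonneg (convex_Ici 0)
    (fun b _ => (hd b).continuousAt.continuousWithinAt)
    (fun b _ => (hd b).differentiableAt.differentiableWithinAt) fun b hb => ?_
  rw [interior_Ici, Set.mem_Ioi] at hb
  rw [(hd b).deriv]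
  have : Real.exp (-l * b) ≤ 1 := Real.exp_le_one_iff.2 (by nlinarith [mul_pos hl hb])
  exact mul_nonneg (by positivity) (by linarith)

lemma stageLoss_antitone {l m c : ℝ} (hl : 0 < l) (hc : 0 ≤ c) :
    stageLoss l √(c + m) ≤ stageLoss l √m :=
  stageLoss_antitoneOn hl (Real.sqrt_nonneg _) (Real.sqrt_nonneg _)
    (Real.sqrt_le_sqrt (by linarith))

/-- The stage cost is `1`-Lipschitz in the opportunity cost `c`, compared with `c = 0`. -/
lemma stageLoss_sub_le {l m c : ℝ} (hl : 0 < l) (hm : 0 ≤ m) (hc : 0 ≤ c) :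
    stageLoss l √m - stageLoss l √(c + m) ≤ c := by
  have h := sq_add_stageLoss_monotoneOn hl (Real.sqrt_nonneg m) (Real.sqrt_nonneg (c + m))
    (Real.sqrt_le_sqrt (by linarith))
  simp only [Real.sq_sqrt hm, Real.sq_sqrt (add_nonneg hc hm)] at h
  linarith

lemma valueJ_succ_zero (l γ : ℝ) (n : ℕ) :
    valueJ l γ (n + 1) 0 = valueJ l γ n 0 + 2 / l ^ 2 := by
  rw [valueJ]

lemma valueJ_succ_succ (l γ : ℝ) (n E : ℕ) :
    valueJ l γ (n + 1) (E + 1) = valueJ l γ n (E + 1) + 2 / l ^ 2 -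
      stageLoss l √(max (valueJ l γ n E - valueJ l γ n (E + 1)) 0 + 1 / ((γ + 1) * l ^ 2)) := by
  rw [valueJ, stageLoss]

lemma valueJ_succ_le {l γ : ℝ} (hl : 0 < l) (hγ : 0 < γ) (n E : ℕ) :
    valueJ l γ n (E + 1) ≤ valueJ l γ n E := by
  induction n generalizing E with
  | zero => simp [valueJ]
  | succ n ih =>
    have hm : 0 ≤ 1 / ((γ + 1) * l ^ 2) := by positivity
    have hE := stageLoss_sub_le hl hm (sub_nonneg.2 (ih E))
    rw [valueJ_succ_succ, max_eq_left (sub_nonneg.2 (ih E))]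
    cases E with
    | zero =>
      rw [valueJ_succ_zero]
      linarith [stageLoss_nonneg hl
        (Real.sqrt_nonneg (valueJ l γ n 0 - valueJ l γ n (0 + 1) + 1 / ((γ + 1) * l ^ 2))), ih 0]
    | succ E =>
      rw [valueJ_succ_succ l γ n E, max_eq_left (sub_nonneg.2 (ih E))]
      linarith [stageLoss_antitone (m := 1 / ((γ + 1) * l ^ 2)) hl (sub_nonneg.2 (ih E))]

/-- The value function `J(t, E)` is nonincreasing in the number `E` of remaining transmission
opportunities: `J(t, E-1) ≥ J(t, E)` for all `1 ≤ t ≤ T+1` and `E ≥ 1`. Consequently the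
opportunity cost `c_t(E) = J(t+1, E-1) - J(t+1, E)` is nonnegative, the truncation
`max (·) 0` in the definition of `β_t(E)` is never active, and
`β_t(E) = √(c_t(E) + m) ≥ √m`, where `m = 1/((γ+1)λ²)`. -/
theorem valueJ_antitone_and_threshold (l γ : ℝ) (hl : 0 < l) (hγ : 0 < γ) (T : ℕ) :
    (∀ t E : ℕ, 1 ≤ t → t ≤ T + 1 → 1 ≤ E →
      valueJ l γ (T + 1 - t) E ≤ valueJ l γ (T + 1 - t) (E - 1)) ∧
    (∀ t E : ℕ, 1 ≤ t → t ≤ T → 1 ≤ E →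
      0 ≤ valueJ l γ (T - t) (E - 1) - valueJ l γ (T - t) E ∧
      max (valueJ l γ (T - t) (E - 1) - valueJ l γ (T - t) E) 0 =
        valueJ l γ (T - t) (E - 1) - valueJ l γ (T - t) E ∧
      Real.sqrt (1 / ((γ + 1) * l ^ 2)) ≤
        Real.sqrt ((valueJ l γ (T - t) (E - 1) - valueJ l γ (T - t) E) +
          1 / ((γ + 1) * l ^ 2))) := by
  have key : ∀ n E : ℕ, 1 ≤ E → valueJ l γ n E ≤ valueJ l γ n (E - 1) := by
    intro n E hE
    obtain ⟨E, rfl⟩ := Nat.exists_eq_add_of_le' hE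
    exact valueJ_succ_le hl hγ n E
  refine ⟨fun t E _ _ hE => key _ E hE, fun t E _ _ hE => ?_⟩
  have h := sub_nonneg.2 (key (T - t) E hE)
  exact ⟨h, max_eq_left h, Real.sqrt_le_sqrt (by linarith)⟩
end

section
/- Fix λ > 0, γ > 0, T ∈ ℕ, and set m = 1/((γ+1)·λ²) and u = 1/√(1+γ) (so λ·√m = u). Define J as the dynamic-programming value: J(T+1, E) = 0 for all E; J(t, 0) = J(t+1, 0) + 2/λ²; and for E ≥ 1, J(t, E) = J(t+1, E) + 2/λ² − (2/λ)·(β_t(E) + 1/λ)·exp(−λ·β_t(E)), where β_t(E) = √( max(J(t+1, E−1) − J(t+1, E), 0) + m ). Then for every 1 ≤ t ≤ T+1 and every E ≥ T − t + 1, the opportunity cost vanishes, β_t(E) = √m, and J(t, E) = (T − t + 1) · (2/λ²) · ( 1 − (1 + u)·e^{−u} ). In particular J(1, T) = T·(2/λ²)·(1 − (1 + 1/√(1+γ))·e^{−1/√(1+γ)}). -/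
/-! When at least as many transmissions as stages remain, spending one still leaves one
per later stage, so the values before and after spending it agree and the opportunity cost is zero.
By induction on the number of remaining stages (`valueJ_of_le`) every stage then costs the same
constant, the one given by threshold `√m`, and the identity `l * √m = 1 / √(1 + γ)`
(`mul_sqrt_threshold`) puts that constant in closed form. -/

open MeasureTheory Real

lemma mul_sqrt_threshold (l γ : ℝ) (hl : 0 < l) :
    l * Real.sqrt (1 / ((γ + 1) * l ^ 2)) = 1 / Real.sqrt (1 + γ) := by
  rw [Real.sqrt_div zero_le_one, Real.sqrt_one, Real.sqrt_mul' _ (sq_nonneg l),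
    Real.sqrt_sq hl.le, add_comm γ 1, mul_one_div, mul_comm (Real.sqrt _) l,
    ← div_div, div_self hl.ne']

/-- With `n` stages left and at least `n` transmissions available, the value is `n` times a
stage cost independent of the budget: in the recursive step both budgets being compared are
still at least the number of stages left, so the two values cancel. -/
lemma valueJ_of_le (l γ : ℝ) (hl : 0 < l) (n E : ℕ) (h : n ≤ E) :
    valueJ l γ n E = (n : ℝ) * (2 / l ^ 2) *
      (1 - (1 + 1 / Real.sqrt (1 + γ)) * Real.exp (-(1 / Real.sqrt (1 + γ)))) := by
  induction n generalizing E with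
  | zero => simp [valueJ]
  | succ n ih =>
    obtain ⟨E, rfl⟩ : ∃ k, E = k + 1 := ⟨E - 1, by omega⟩
    rw [valueJ, ih E (by omega), ih (E + 1) (by omega), sub_self, max_self, zero_add,
      neg_mul, mul_sqrt_threshold l γ hl]
    have hs : Real.sqrt (1 / ((γ + 1) * l ^ 2)) = 1 / Real.sqrt (1 + γ) / l := by
      rw [← mul_sqrt_threshold l γ hl, mul_div_cancel_left₀ _ hl.ne']
    rw [hs]
    generalize 1 / Real.sqrt (1 + γ) = u
    push_cast
    field_simp
    ring

/-- When the communication constraint is never binding (`E ≥ T - t + 1`), the opportunity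
cost vanishes, the optimal threshold is `β_t(E) = √m` with `m = 1/((γ+1)λ²)`, and
`J(t, E) = (T - t + 1) (2/λ²) (1 - (1+u) e^{-u})` where `u = 1/√(1+γ) = λ√m`. In particular
`J(1, T) = T (2/λ²) (1 - (1 + 1/√(1+γ)) e^{-1/√(1+γ)})`. -/
theorem valueJ_unconstrained (l γ : ℝ) (hl : 0 < l) (hγ : 0 < γ) (T : ℕ)
    (m u : ℝ) (hm : m = 1 / ((γ + 1) * l ^ 2)) (hu : u = 1 / Real.sqrt (1 + γ)) :
    l * Real.sqrt m = u ∧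
    (∀ t E : ℕ, 1 ≤ t → t ≤ T → (T : ℝ) - t + 1 ≤ E →
      valueJ l γ (T - t) (E - 1) - valueJ l γ (T - t) E = 0 ∧
      Real.sqrt (max (valueJ l γ (T - t) (E - 1) - valueJ l γ (T - t) E) 0 + m) =
        Real.sqrt m) ∧
    (∀ t E : ℕ, 1 ≤ t → t ≤ T + 1 → (T : ℝ) - t + 1 ≤ E →
      valueJ l γ (T + 1 - t) E =
        ((T : ℝ) - t + 1) * (2 / l ^ 2) * (1 - (1 + u) * Real.exp (-u))) ∧
    valueJ l γ T T =
      (T : ℝ) * (2 / l ^ 2) *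
        (1 - (1 + 1 / Real.sqrt (1 + γ)) * Real.exp (-(1 / Real.sqrt (1 + γ)))) := by
  have hz : ∀ t E : ℕ, 1 ≤ t → t ≤ T → (T : ℝ) - t + 1 ≤ E →
      valueJ l γ (T - t) (E - 1) - valueJ l γ (T - t) E = 0 := by
    intro t E _ _ hE
    have hE' : T + 1 ≤ E + t := by
      have : (T : ℝ) + 1 ≤ E + t := by linarith
      exact_mod_cast this
    rw [valueJ_of_le l γ hl _ (E - 1) (by omega), valueJ_of_le l γ hl _ E (by omega), sub_self]
  refine ⟨?_, ?_, ?_, valueJ_of_le l γ hl T T le_rfl⟩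
  · rw [hm, hu, mul_sqrt_threshold l γ hl]
  · intro t E h1 h2 hE
    have h := hz t E h1 h2 hE
    exact ⟨h, by rw [h, max_self, zero_add]⟩
  · intro t E _ h2 hE
    have hE' : T + 1 ≤ E + t := by
      have : (T : ℝ) + 1 ≤ E + t := by linarith
      exact_mod_cast this
    rw [valueJ_of_le l γ hl _ E (by omega), hu, Nat.cast_sub h2]
    push_cast
    ring
end
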